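/- arXiv:1807.04795 — 2 statements merged into one kernel-verified Lean document; each statement's English description precedes it below -/
import Mathlib

section
/- Let E₀, E₃ be C¹ on [0,T], E₁ be C¹ on [0,T]×[−τ,0], E₂ be C¹ on [0,T]×[−τ,0]² with E₂(t,s,r) = E₂(t,r,s), and suppose (E₀,E₁,E₂,E₃) satisfies equations (i)–(iv) of the MFG Riccati system (the boundary conditions at t = T and s = −τ are not needed). Then for every t ∈ [0,T], every a ∈ ℝ and every continuous w : [−τ,0] → ℝ: E₀'(t)·a² − 2a·∫_{−τ}^0 ∂ₜE₁(t,−τ−s)w(s)ds + ∫_{−τ}^0∫_{−τ}^0 ∂ₜE₂(t,−τ−s,−τ−r)w(s)w(r)ds dr + E₃'(t) + σ²E₀(t) − ∫_{−τ}^0 w(s)·(d/ds)[2aE₁(t,−τ−s) − 2∫_{−τ}^0 E₂(t,−τ−s,−τ−r)w(r)dr] ds − 2[(E₀(t)+E₁(t,0))a − ∫_{−τ}^0 (E₁(t,−τ−s)+E₂(t,−τ−s,0))w(s)ds]² + (ε/2)a² = 0. (With a = m₀ − z₀ and w = m₁ − z₁, this identity is the verification that the quadratic ansatz V(t,z₀,z₁)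 = E₀(t)(m₀−z₀)² − 2(m₀−z₀)∫E₁(t,−τ−s)(m₁−z₁)(s)ds + ∬E₂(t,−τ−s,−τ−r)(m₁−z₁)(s)(m₁−z₁)(r)dsdr + E₃(t) solves the mean field game HJB equation and that the same expression solves the master equation.) -/
open Set

/-- The MFG Riccati system (i)–(iv) on [0,T]×[−τ,0], with one-sided (within-set)
derivatives at the boundary, together with the C¹ regularity. -/
def IsMFGRiccati (T τ σ ε : ℝ) (E₀ : ℝ → ℝ) (E₁ : ℝ → ℝ → ℝ)
    (E₂ : ℝ → ℝ → ℝ → ℝ) (E₃ : ℝ → ℝ) : Prop :=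
  ContDiffOn ℝ 1 E₀ (Icc 0 T) ∧
  ContDiffOn ℝ 1 (fun p : ℝ × ℝ => E₁ p.1 p.2) (Icc 0 T ×ˢ Icc (-τ) 0) ∧
  ContDiffOn ℝ 1 (fun p : ℝ × ℝ × ℝ => E₂ p.1 p.2.1 p.2.2)
    (Icc 0 T ×ˢ Icc (-τ) 0 ×ˢ Icc (-τ) 0) ∧
  ContDiffOn ℝ 1 E₃ (Icc 0 T) ∧
  (∀ t ∈ Icc (0:ℝ) T,
    derivWithin E₀ (Icc 0 T) t - 2 * (E₀ t + E₁ t 0)^2 + ε/2 = 0) ∧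
  (∀ t ∈ Icc (0:ℝ) T, ∀ s ∈ Icc (-τ) (0:ℝ),
    derivWithin (fun u => E₁ u s) (Icc 0 T) t
      - derivWithin (fun v => E₁ t v) (Icc (-τ) 0) s
      - 2 * (E₀ t + E₁ t 0) * (E₁ t s + E₂ t s 0) = 0) ∧
  (∀ t ∈ Icc (0:ℝ) T, ∀ s ∈ Icc (-τ) (0:ℝ), ∀ r ∈ Icc (-τ) (0:ℝ),
    derivWithin (fun u => E₂ u s r) (Icc 0 T) t
      - derivWithin (fun v => E₂ t v r) (Icc (-τ) 0) s
      - derivWithin (fun v => E₂ t s v) (Icc (-τ) 0) r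
      - 2 * (E₁ t s + E₂ t s 0) * (E₁ t r + E₂ t r 0) = 0) ∧
  (∀ t ∈ Icc (0:ℝ) T,
    derivWithin E₃ (Icc 0 T) t + σ^2 * E₀ t = 0)

/-!
At a fixed time the system prescribes the time derivatives, so the identity only concerns the
reflected kernels `p s = E₁ t (-τ - s)` and `q s r = E₂ t (-τ - s) (-τ - r)`. Reflection turns the
transport terms of (ii) and (iii) into `-∂ₛ p` and `-(∂ₛ q + ∂ᵣ q)`; since `q` is symmetric, the
latter integrates against `w s * w r` to `-2 ∬ ∂ₛ q(s, r) w(s) w(r)`. Differentiating under the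
integral sign shows that `∫ w · d/ds [2 a p - 2 ∫ q w]` cancels exactly these contributions, and the
quadratic terms left over from (i)–(iii) expand the square of
`(E₀ + E₁(t, 0)) a - ∫ (E₁ + E₂(·, ·, 0)) w`.
-/

open MeasureTheory Function Topology

section Calculus

theorem continuousOn_derivWithin_fst {𝕜 F G : Type*} [NontriviallyNormedField 𝕜]
    [NormedAddCommGroup F] [NormedSpace 𝕜 F] [NormedAddCommGroup G] [NormedSpace 𝕜 G]
    {f : 𝕜 → F → G} {s : Set 𝕜} {t : Set F} (hf : ContDiffOn 𝕜 1 (uncurry f) (s ×ˢ t))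
    (hs : UniqueDiffOn 𝕜 s) (ht : UniqueDiffOn 𝕜 t) :
    ContinuousOn (uncurry fun x y => derivWithin (fun v => f v y) s x) (s ×ˢ t) := by
  refine ((hf.continuousOn_fderivWithin (hs.prod ht) le_rfl).clm_apply
    (continuousOn_const (c := ((1 : 𝕜), (0 : F))))).congr ?_
  rintro ⟨x, y⟩ ⟨hx, hy⟩
  have hslice : HasDerivWithinAt (fun v : 𝕜 => (v, y)) ((1 : 𝕜), (0 : F)) s x :=
    (hasDerivWithinAt_id x s).prodMk (hasDerivWithinAt_const x s y)
  have htotal := ((hf.differentiableOn one_ne_zero) (x, y) ⟨hx, hy⟩).hasFDerivWithinAt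
  have hmaps : MapsTo (fun v : 𝕜 => (v, y)) s (s ×ˢ t) := fun v hv => ⟨hv, hy⟩
  exact (htotal.comp_hasDerivWithinAt x hslice hmaps).derivWithin (hs x hx)

theorem derivWithin_comp_const_sub_Icc {F : Type*} [NormedAddCommGroup F] [NormedSpace ℝ F]
    (f : ℝ → F) {a b c : ℝ} (hc : a + b = c) (x : ℝ) :
    derivWithin (fun v => f (c - v)) (Icc a b) x = -derivWithin f (Icc a b) (c - x) := by
  rw [derivWithin_comp_const_sub, ← hc]
  congr 2
  simp [← image_vadd, add_comm]

theorem hasDerivAt_integral_mul_of_intervalIntegrable {f f' : ℝ → ℝ → ℝ} {w : ℝ → ℝ}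
    {c d x : ℝ} {U : Set ℝ} (hU : U ∈ 𝓝 x) (hf : ∀ v ∈ U, ContinuousOn (f v) (uIcc c d))
    (hf' : ContinuousOn (uncurry f') (U ×ˢ uIcc c d))
    (hderiv : ∀ v ∈ U, ∀ r ∈ uIcc c d, HasDerivAt (fun v => f v r) (f' v r) v)
    (hw : IntervalIntegrable w volume c d) :
    HasDerivAt (fun v => ∫ r in c..d, f v r * w r) (∫ r in c..d, f' x r * w r) x := by
  obtain ⟨K, hK, hKU, hKc⟩ := local_compact_nhds hU
  obtain ⟨C, hC⟩ := (hKc.prod (isCompact_uIcc (a := c) (b := d))).exists_bound_of_continuousOn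
    (hf'.mono (prod_mono_left hKU))
  have hf'x : ContinuousOn (f' x) (uIcc c d) :=
    hf'.comp (f := fun r => (x, r)) (by fun_prop) fun r hr => ⟨mem_of_mem_nhds hU, hr⟩
  have meas {g : ℝ → ℝ} (hg : ContinuousOn g (uIcc c d)) :
      AEStronglyMeasurable (fun r => g r * w r) (volume.restrict (uIoc c d)) :=
    (hw.continuousOn_mul hg).aestronglyMeasurable_restrict_uIoc
  refine (intervalIntegral.hasDerivAt_integral_of_dominated_loc_of_deriv_le
    (F' := fun v r => f' v r * w r) (bound := fun r => C * ‖w r‖)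
    hK ?_ ?_ (meas hf'x) ?_ (hw.norm.const_mul C) ?_).2
  · filter_upwards [hU] with v hv using meas (hf v hv)
  · exact hw.continuousOn_mul (hf x (mem_of_mem_nhds hU))
  · refine .of_forall fun r hr v hv => ?_
    rw [norm_mul]
    gcongr
    exact hC (v, r) ⟨hv, uIoc_subset_uIcc hr⟩
  · exact .of_forall fun r hr v hv => (hderiv v (hKU hv) r (uIoc_subset_uIcc hr)).mul_const (w r)

theorem hasDerivAt_derivWithin_Icc {F : Type*} [NormedAddCommGroup F] [NormedSpace ℝ F]
    {f : ℝ → F} {a b x : ℝ} (hf : DifferentiableOn ℝ f (Icc a b)) (hx : x ∈ Ioo a b) :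
    HasDerivAt f (derivWithin f (Icc a b) x) x :=
  (hf x (Ioo_subset_Icc_self hx)).hasDerivWithinAt.hasDerivAt (Icc_mem_nhds hx.1 hx.2)

theorem hasDerivAt_integral_mul_of_contDiffOn {f : ℝ → ℝ → ℝ} {w : ℝ → ℝ} {a b c d x : ℝ}
    (hcd : c < d) (hf : ContDiffOn ℝ 1 (uncurry f) (Icc a b ×ˢ Icc c d))
    (hw : IntervalIntegrable w volume c d) (hx : x ∈ Ioo a b) :
    HasDerivAt (fun v => ∫ r in c..d, f v r * w r)
      (∫ r in c..d, derivWithin (fun v => f v r) (Icc a b) x * w r) x := by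
  have hf' := continuousOn_derivWithin_fst hf (uniqueDiffOn_Icc (hx.1.trans hx.2))
    (uniqueDiffOn_Icc hcd)
  rw [← uIcc_of_le hcd.le] at hf hf'
  refine hasDerivAt_integral_mul_of_intervalIntegrable (Ioo_mem_nhds hx.1 hx.2) (fun v hv => ?_)
    (hf'.mono (prod_mono_left Ioo_subset_Icc_self)) (fun v hv r hr => ?_) hw
  · exact hf.continuousOn.comp (f := fun r => (v, r)) (by fun_prop)
      fun r hr => ⟨Ioo_subset_Icc_self hv, hr⟩
  · exact hasDerivAt_derivWithin_Icc ((hf.differentiableOn one_ne_zero).comp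
      (f := fun v => (v, r)) (by fun_prop) fun v hv => ⟨hv, hr⟩) hv

end Calculus

section Integration

theorem integral_integral_add_swap {X E : Type*} [MeasurableSpace X] {μ : Measure X} [SFinite μ]
    [NormedAddCommGroup E] [NormedSpace ℝ E] {F : X → X → E}
    (hF : Integrable (uncurry F) (μ.prod μ)) :
    ∫ x, ∫ y, (F x y + F y x) ∂μ ∂μ = (2 : ℝ) • ∫ x, ∫ y, F x y ∂μ ∂μ := by
  have hadd := integral_integral_add hF hF.swap
  simp only [uncurry_apply_pair, comp_apply, Prod.swap_prod_mk] at hadd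
  rw [hadd, ← integral_integral_swap hF, two_smul]

theorem integrable_prod_mul_mul_of_continuousOn {X Y : Type*}
    [TopologicalSpace X] [T2Space X] [MeasurableSpace X] [OpensMeasurableSpace X]
    [TopologicalSpace Y] [T2Space Y] [MeasurableSpace Y] [OpensMeasurableSpace Y]
    [SecondCountableTopologyEither X Y]
    {μ : Measure X} {ν : Measure Y} [SFinite μ] [SFinite ν] {S : Set X} {K : Set Y}
    {F : X → Y → ℝ} {u : X → ℝ} {v : Y → ℝ} (hS : IsCompact S) (hK : IsCompact K)
    (hF : ContinuousOn (uncurry F) (S ×ˢ K)) (hu : IntegrableOn u S μ) (hv : IntegrableOn v K ν) :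
    Integrable (uncurry fun x y => F x y * u x * v y) ((μ.restrict S).prod (ν.restrict K)) := by
  have huv : IntegrableOn (fun p : X × Y => u p.1 * v p.2) (S ×ˢ K) (μ.prod ν) := by
    rw [IntegrableOn, ← Measure.prod_restrict]
    exact hu.mul_prod hv
  rw [Measure.prod_restrict]
  exact (huv.continuousOn_mul hF (hS.prod hK)).congr (.of_forall fun p => (mul_assoc _ _ _).symm)

theorem intervalIntegral_eq_integral_Icc {E : Type*} [NormedAddCommGroup E] [NormedSpace ℝ E]
    {μ : Measure ℝ} [NullSingletonClass μ] {a b : ℝ} (hab : a ≤ b) (f : ℝ → E) :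
    ∫ x in a..b, f x ∂μ = ∫ x in Icc a b, f x ∂μ := by
  rw [intervalIntegral.integral_of_le hab, integral_Icc_eq_integral_Ioc]

variable {a b : ℝ} {w : ℝ → ℝ}

theorem integral_integral_mul_sub_add_swap {D : ℝ → ℝ → ℝ} {k : ℝ → ℝ} (hab : a ≤ b)
    (hD : ContinuousOn (uncurry D) (Icc a b ×ˢ Icc a b)) (hk : ContinuousOn k (Icc a b))
    (hw : IntervalIntegrable w volume a b) :
    ∫ s in a..b, ∫ r in a..b, (2 * k s * k r - (D s r + D r s)) * w s * w r
      = 2 * (∫ s in a..b, k s * w s) ^ 2 - 2 * ∫ s in a..b, ∫ r in a..b, D s r * w s * w r := by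
  have hw' : IntegrableOn w (Icc a b) := (intervalIntegrable_iff_integrableOn_Icc_of_le hab).1 hw
  have hDww := integrable_prod_mul_mul_of_continuousOn isCompact_Icc isCompact_Icc hD hw' hw'
  have hkw : IntegrableOn (fun s => k s * w s) (Icc a b) := hw'.continuousOn_mul hk isCompact_Icc
  have hsub := integral_integral_sub ((hkw.mul_prod hkw).const_mul 2) (hDww.add hDww.swap)
  have hDD := integral_integral_add_swap hDww
  simp only [uncurry_apply_pair, comp_apply, Prod.swap_prod_mk, Pi.add_apply] at hsub
  simp only [intervalIntegral_eq_integral_Icc hab]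
  calc ∫ s in Icc a b, ∫ r in Icc a b, (2 * k s * k r - (D s r + D r s)) * w s * w r
    _ = ∫ s in Icc a b, ∫ r in Icc a b, (2 * (k s * w s * (k r * w r))
          - (D s r * w s * w r + D r s * w r * w s)) := by
      congr! 4; ring
    _ = _ := by
      rw [hsub, hDD]
      simp only [integral_const_mul, integral_mul_const, smul_eq_mul]
      ring

theorem integral_mul_derivWithin_sub_integral {p : ℝ → ℝ} {q : ℝ → ℝ → ℝ} (hab : a < b)
    (hp : ContDiffOn ℝ 1 p (Icc a b)) (hq : ContDiffOn ℝ 1 (uncurry q) (Icc a b ×ˢ Icc a b))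
    (hw : IntervalIntegrable w volume a b) (α β : ℝ) :
    ∫ s in a..b, w s *
        derivWithin (fun v => α * p v - β * ∫ r in a..b, q v r * w r) (Icc a b) s
      = α * (∫ s in a..b, derivWithin p (Icc a b) s * w s)
        - β * ∫ s in a..b, ∫ r in a..b, derivWithin (fun v => q v r) (Icc a b) s * w s * w r := by
  have hI := uniqueDiffOn_Icc hab
  have hp' : ContinuousOn (derivWithin p (Icc a b)) (Icc a b) :=
    hp.continuousOn_derivWithin hI le_rfl
  have hw' : IntegrableOn w (Icc a b) := (intervalIntegrable_iff_integrableOn_Icc_of_le hab.le).1 hw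
  have hq'ww := (integrable_prod_mul_mul_of_continuousOn isCompact_Icc isCompact_Icc
    (continuousOn_derivWithin_fst hq hI hI) hw' hw').integral_prod_left
  simp only [uncurry_apply_pair, ← intervalIntegral_eq_integral_Icc hab.le] at hq'ww
  rw [← intervalIntegral.integral_const_mul, ← intervalIntegral.integral_const_mul,
    ← intervalIntegral.integral_sub]
  · refine intervalIntegral.integral_congr_Ioo_of_le hab.le fun s hs => ?_
    have hderiv :=
      ((hasDerivAt_derivWithin_Icc (hp.differentiableOn one_ne_zero) hs).const_mul α).fun_sub
        ((hasDerivAt_integral_mul_of_contDiffOn hab hq hw hs).const_mul β)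
    have hinner : ∫ r in a..b, derivWithin (fun v => q v r) (Icc a b) s * w s * w r
        = w s * ∫ r in a..b, derivWithin (fun v => q v r) (Icc a b) s * w r := by
      rw [← intervalIntegral.integral_const_mul]
      congr! 2; ring
    simp only [hderiv.hasDerivWithinAt.derivWithin (hI s (Ioo_subset_Icc_self hs)), hinner]
    ring
  · exact (hw.continuousOn_mul (uIcc_of_le hab.le ▸ hp')).const_mul α
  · exact ((intervalIntegrable_iff_integrableOn_Icc_of_le hab.le).2 hq'ww).const_mul β

end Integration

theorem neg_sub_mem_Icc {α : Type*} [AddCommGroup α] [PartialOrder α] [IsOrderedAddMonoid α]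
    {c x : α} (hx : x ∈ Icc (-c) 0) : -c - x ∈ Icc (-c) 0 :=
  sub_mem_Icc_iff_right.2 (by simpa using hx)

namespace IsMFGRiccati

variable {T τ σ ε t s r : ℝ} {E₀ : ℝ → ℝ} {E₁ : ℝ → ℝ → ℝ} {E₂ : ℝ → ℝ → ℝ → ℝ} {E₃ : ℝ → ℝ}

theorem contDiffOn_reflected₁ (h : IsMFGRiccati T τ σ ε E₀ E₁ E₂ E₃) (ht : t ∈ Icc 0 T) :
    ContDiffOn ℝ 1 (fun s => E₁ t (-τ - s)) (Icc (-τ) 0) :=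
  h.2.1.comp (f := fun s => (t, -τ - s)) (by fun_prop)
    fun _ hs => ⟨ht, neg_sub_mem_Icc hs⟩

theorem contDiffOn_reflected₂ (h : IsMFGRiccati T τ σ ε E₀ E₁ E₂ E₃) (ht : t ∈ Icc 0 T) :
    ContDiffOn ℝ 1 (uncurry fun s r => E₂ t (-τ - s) (-τ - r)) (Icc (-τ) 0 ×ˢ Icc (-τ) 0) :=
  h.2.2.1.comp (f := fun p : ℝ × ℝ => (t, -τ - p.1, -τ - p.2)) (by fun_prop)
    fun _ hp => ⟨ht, neg_sub_mem_Icc hp.1, neg_sub_mem_Icc hp.2⟩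

theorem continuousOn_add_boundary (h : IsMFGRiccati T τ σ ε E₀ E₁ E₂ E₃) (ht : t ∈ Icc 0 T) :
    ContinuousOn (fun s => E₁ t (-τ - s) + E₂ t (-τ - s) 0) (Icc (-τ) 0) :=
  (h.contDiffOn_reflected₁ ht).continuousOn.add <|
    h.2.2.1.continuousOn.comp (f := fun s => (t, -τ - s, (0 : ℝ))) (by fun_prop)
      fun _ hs => ⟨ht, neg_sub_mem_Icc hs, hs.1.trans hs.2, le_rfl⟩

theorem derivWithin_time_reflected₁ (h : IsMFGRiccati T τ σ ε E₀ E₁ E₂ E₃)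
    (ht : t ∈ Icc 0 T) (hs : s ∈ Icc (-τ) 0) :
    derivWithin (fun u => E₁ u (-τ - s)) (Icc 0 T) t
      = 2 * (E₀ t + E₁ t 0) * (E₁ t (-τ - s) + E₂ t (-τ - s) 0)
        - derivWithin (fun v => E₁ t (-τ - v)) (Icc (-τ) 0) s := by
  obtain ⟨-, -, -, -, -, h₁, -, -⟩ := h
  rw [derivWithin_comp_const_sub_Icc _ (add_zero (-τ))]
  linear_combination h₁ t ht (-τ - s) (neg_sub_mem_Icc hs)

theorem derivWithin_time_reflected₂ (h : IsMFGRiccati T τ σ ε E₀ E₁ E₂ E₃)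
    (hsym : ∀ s ∈ Icc (-τ) 0, ∀ r ∈ Icc (-τ) 0, E₂ t s r = E₂ t r s)
    (ht : t ∈ Icc 0 T) (hs : s ∈ Icc (-τ) 0) (hr : r ∈ Icc (-τ) 0) :
    derivWithin (fun u => E₂ u (-τ - s) (-τ - r)) (Icc 0 T) t
      = 2 * (E₁ t (-τ - s) + E₂ t (-τ - s) 0) * (E₁ t (-τ - r) + E₂ t (-τ - r) 0)
        - (derivWithin (fun v => E₂ t (-τ - v) (-τ - r)) (Icc (-τ) 0) s
          + derivWithin (fun v => E₂ t (-τ - v) (-τ - s)) (Icc (-τ) 0) r) := by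
  obtain ⟨-, -, -, -, -, -, h₂, -⟩ := h
  have hs' := neg_sub_mem_Icc hs
  have hr' := neg_sub_mem_Icc hr
  have hswap : derivWithin (fun v => E₂ t (-τ - s) v) (Icc (-τ) 0) (-τ - r)
      = derivWithin (fun v => E₂ t v (-τ - s)) (Icc (-τ) 0) (-τ - r) :=
    derivWithin_congr (hsym _ hs') (hsym _ hs' _ hr')
  rw [derivWithin_comp_const_sub_Icc (fun v => E₂ t v (-τ - r)) (add_zero (-τ)),
    derivWithin_comp_const_sub_Icc (fun v => E₂ t v (-τ - s)) (add_zero (-τ))]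
  linear_combination h₂ t ht _ hs' _ hr' + hswap

variable {w : ℝ → ℝ}

theorem integral_derivWithin_time₁ (h : IsMFGRiccati T τ σ ε E₀ E₁ E₂ E₃) (hτ : 0 < τ)
    (ht : t ∈ Icc 0 T) (hw : IntervalIntegrable w volume (-τ) 0) :
    ∫ s in (-τ)..0, derivWithin (fun u => E₁ u (-τ - s)) (Icc 0 T) t * w s
      = 2 * (E₀ t + E₁ t 0) * (∫ s in (-τ)..0, (E₁ t (-τ - s) + E₂ t (-τ - s) 0) * w s)
        - ∫ s in (-τ)..0, derivWithin (fun v => E₁ t (-τ - v)) (Icc (-τ) 0) s * w s := by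
  have hI : uIcc (-τ) 0 = Icc (-τ) 0 := uIcc_of_le (neg_nonpos.2 hτ.le)
  have hp' := (h.contDiffOn_reflected₁ ht).continuousOn_derivWithin
    (uniqueDiffOn_Icc (neg_lt_zero.2 hτ)) le_rfl
  rw [← intervalIntegral.integral_const_mul, ← intervalIntegral.integral_sub]
  · refine intervalIntegral.integral_congr fun s hs => ?_
    simp only [h.derivWithin_time_reflected₁ ht (hI ▸ hs)]
    ring
  · exact (hw.continuousOn_mul (hI ▸ h.continuousOn_add_boundary ht)).const_mul _
  · exact hw.continuousOn_mul (hI ▸ hp')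

theorem integral_derivWithin_time₂ (h : IsMFGRiccati T τ σ ε E₀ E₁ E₂ E₃)
    (hsym : ∀ s ∈ Icc (-τ) 0, ∀ r ∈ Icc (-τ) 0, E₂ t s r = E₂ t r s) (hτ : 0 < τ)
    (ht : t ∈ Icc 0 T) (hw : IntervalIntegrable w volume (-τ) 0) :
    ∫ s in (-τ)..0, ∫ r in (-τ)..0,
        derivWithin (fun u => E₂ u (-τ - s) (-τ - r)) (Icc 0 T) t * w s * w r
      = 2 * (∫ s in (-τ)..0, (E₁ t (-τ - s) + E₂ t (-τ - s) 0) * w s) ^ 2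
        - 2 * ∫ s in (-τ)..0, ∫ r in (-τ)..0,
            derivWithin (fun v => E₂ t (-τ - v) (-τ - r)) (Icc (-τ) 0) s * w s * w r := by
  have hle : -τ ≤ 0 := neg_nonpos.2 hτ.le
  have hI := uniqueDiffOn_Icc (neg_lt_zero.2 hτ)
  rw [← integral_integral_mul_sub_add_swap hle
    (continuousOn_derivWithin_fst (h.contDiffOn_reflected₂ ht) hI hI)
    (h.continuousOn_add_boundary ht) hw]
  refine intervalIntegral.integral_congr fun s hs => intervalIntegral.integral_congr fun r hr => ?_
  rw [uIcc_of_le hle] at hs hr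
  simp only [h.derivWithin_time_reflected₂ hsym ht hs hr]

end IsMFGRiccati

theorem mfg_ansatz_verification_general {T τ σ ε : ℝ} (hτ : 0 < τ)
    {E₀ : ℝ → ℝ} {E₁ : ℝ → ℝ → ℝ} {E₂ : ℝ → ℝ → ℝ → ℝ} {E₃ : ℝ → ℝ}
    (hRic : IsMFGRiccati T τ σ ε E₀ E₁ E₂ E₃) {t : ℝ} (ht : t ∈ Icc 0 T)
    (hsym : ∀ s ∈ Icc (-τ) 0, ∀ r ∈ Icc (-τ) 0, E₂ t s r = E₂ t r s) (a : ℝ) {w : ℝ → ℝ}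
    (hw : IntervalIntegrable w volume (-τ) 0) :
    derivWithin E₀ (Icc 0 T) t * a^2
      - 2 * a * (∫ s in (-τ)..(0:ℝ),
          derivWithin (fun u => E₁ u (-τ - s)) (Icc 0 T) t * w s)
      + (∫ s in (-τ)..(0:ℝ), ∫ r in (-τ)..(0:ℝ),
          derivWithin (fun u => E₂ u (-τ - s) (-τ - r)) (Icc 0 T) t * w s * w r)
      + derivWithin E₃ (Icc 0 T) t + σ^2 * E₀ t
      - (∫ s in (-τ)..(0:ℝ), w s *
          derivWithin (fun s' => 2 * a * E₁ t (-τ - s')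
            - 2 * ∫ r in (-τ)..(0:ℝ), E₂ t (-τ - s') (-τ - r) * w r)
            (Icc (-τ) 0) s)
      - 2 * ((E₀ t + E₁ t 0) * a
          - ∫ s in (-τ)..(0:ℝ), (E₁ t (-τ - s) + E₂ t (-τ - s) 0) * w s)^2
      + ε/2 * a^2 = 0 := by
  have hlt : -τ < 0 := neg_lt_zero.2 hτ
  have htransport := integral_mul_derivWithin_sub_integral hlt (hRic.contDiffOn_reflected₁ ht)
    (hRic.contDiffOn_reflected₂ ht) hw (2 * a) 2
  rw [htransport, hRic.integral_derivWithin_time₁ hτ ht hw,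
    hRic.integral_derivWithin_time₂ hsym hτ ht hw]
  obtain ⟨-, -, -, -, h₀, -, -, h₃⟩ := hRic
  linear_combination a ^ 2 * h₀ t ht + h₃ t ht

/- STATEMENT 5: a C¹ symmetric solution of the MFG Riccati system (i)–(iv) makes the
quadratic ansatz solve the MFG HJB / master equation: the collected-terms identity holds
for every t ∈ [0,T], a ∈ ℝ and continuous w : [−τ,0] → ℝ. -/
theorem mfg_ansatz_verification (T τ σ ε : ℝ)
    (hT : 0 < T) (hτ : 0 < τ) (hτT : τ ≤ T) (hσ : 0 < σ) (hε : 0 < ε)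
    (E₀ : ℝ → ℝ) (E₁ : ℝ → ℝ → ℝ) (E₂ : ℝ → ℝ → ℝ → ℝ) (E₃ : ℝ → ℝ)
    (hRic : IsMFGRiccati T τ σ ε E₀ E₁ E₂ E₃)
    (hsym : ∀ t ∈ Icc (0:ℝ) T, ∀ s ∈ Icc (-τ) (0:ℝ), ∀ r ∈ Icc (-τ) (0:ℝ),
      E₂ t s r = E₂ t r s) :
    ∀ t ∈ Icc (0:ℝ) T, ∀ a : ℝ, ∀ w : ℝ → ℝ, ContinuousOn w (Icc (-τ) 0) →
      derivWithin E₀ (Icc 0 T) t * a^2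
        - 2 * a * (∫ s in (-τ)..(0:ℝ),
            derivWithin (fun u => E₁ u (-τ - s)) (Icc 0 T) t * w s)
        + (∫ s in (-τ)..(0:ℝ), ∫ r in (-τ)..(0:ℝ),
            derivWithin (fun u => E₂ u (-τ - s) (-τ - r)) (Icc 0 T) t * w s * w r)
        + derivWithin E₃ (Icc 0 T) t + σ^2 * E₀ t
        - (∫ s in (-τ)..(0:ℝ), w s *
            derivWithin (fun s' => 2 * a * E₁ t (-τ - s')
              - 2 * ∫ r in (-τ)..(0:ℝ), E₂ t (-τ - s') (-τ - r) * w r)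
              (Icc (-τ) 0) s)
        - 2 * ((E₀ t + E₁ t 0) * a
            - ∫ s in (-τ)..(0:ℝ), (E₁ t (-τ - s) + E₂ t (-τ - s) 0) * w s)^2
        + ε/2 * a^2 = 0 := by
  intro t ht a w hw
  exact mfg_ansatz_verification_general hτ hRic ht (hsym t ht) a
    (hw.intervalIntegrable_of_Icc (neg_nonpos.2 hτ.le))
end

section
/- Let N ≥ 2 be an integer. Let E₀, E₃ be C¹ on [0,T], E₁ be C¹ on [0,T]×[−τ,0], E₂ be C¹ on [0,T]×[−τ,0]² with E₂(t,s,r) = E₂(t,r,s), and suppose (E₀,E₁,E₂,E₃) satisfies equations (i)–(iv) of the N-player Riccati system (the boundary conditions at t = T and s = −τ are not needed). Then for every t ∈ [0,T], every a ∈ ℝ and every continuous w : [−τ,0] → ℝ: E₀'(t)·a² − 2a·∫_{−τ}^0 ∂ₜE₁(t,−τ−s)w(s)ds + ∫_{−τ}^0∫_{−τ}^0 ∂ₜE₂(t,−τ−s,−τ−r)w(s)w(r)ds dr + E₃'(t) + (1−1/N)σ²E₀(t) − ∫_{−τ}^0 w(s)·(d/ds)[2aE₁(t,−τ−s) − 2∫_{−τ}^0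 E₂(t,−τ−s,−τ−r)w(r)dr] ds + 2(1/N²−1)[(E₀(t)+E₁(t,0))a − ∫_{−τ}^0 (E₁(t,−τ−s)+E₂(t,−τ−s,0))w(s)ds]² + (ε/2)a² = 0. (With a = z̄₀ − z₀^i and w = z̄₁ − z₁^i, this is the verification that the quadratic ansatz V^i solves the N-player Nash HJB system.) -/
open Set

/-- The N-player Riccati system (i)–(iv) on [0,T]×[−τ,0], with one-sided (within-set)
derivatives at the boundary, together with the C¹ regularity. -/
def IsNPlayerRiccati (T τ σ ε : ℝ) (N : ℕ) (E₀ : ℝ → ℝ) (E₁ : ℝ → ℝ → ℝ)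
    (E₂ : ℝ → ℝ → ℝ → ℝ) (E₃ : ℝ → ℝ) : Prop :=
  ContDiffOn ℝ 1 E₀ (Icc 0 T) ∧
  ContDiffOn ℝ 1 (fun p : ℝ × ℝ => E₁ p.1 p.2) (Icc 0 T ×ˢ Icc (-τ) 0) ∧
  ContDiffOn ℝ 1 (fun p : ℝ × ℝ × ℝ => E₂ p.1 p.2.1 p.2.2)
    (Icc 0 T ×ˢ Icc (-τ) 0 ×ˢ Icc (-τ) 0) ∧
  ContDiffOn ℝ 1 E₃ (Icc 0 T) ∧
  (∀ t ∈ Icc (0:ℝ) T,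
    derivWithin E₀ (Icc 0 T) t
      + 2 * (1/(N:ℝ)^2 - 1) * (E₀ t + E₁ t 0)^2 + ε/2 = 0) ∧
  (∀ t ∈ Icc (0:ℝ) T, ∀ s ∈ Icc (-τ) (0:ℝ),
    derivWithin (fun u => E₁ u s) (Icc 0 T) t
      - derivWithin (fun v => E₁ t v) (Icc (-τ) 0) s
      + 2 * (1/(N:ℝ)^2 - 1) * (E₀ t + E₁ t 0) * (E₁ t s + E₂ t s 0) = 0) ∧
  (∀ t ∈ Icc (0:ℝ) T, ∀ s ∈ Icc (-τ) (0:ℝ), ∀ r ∈ Icc (-τ) (0:ℝ),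
    derivWithin (fun u => E₂ u s r) (Icc 0 T) t
      - derivWithin (fun v => E₂ t v r) (Icc (-τ) 0) s
      - derivWithin (fun v => E₂ t s v) (Icc (-τ) 0) r
      + 2 * (1/(N:ℝ)^2 - 1) * (E₁ t s + E₂ t s 0) * (E₁ t r + E₂ t r 0) = 0) ∧
  (∀ t ∈ Icc (0:ℝ) T,
    derivWithin E₃ (Icc 0 T) t + (1 - 1/(N:ℝ)) * σ^2 * E₀ t = 0)

/-!
Reflecting the delay variable, `s ↦ -τ - s`, turns the identity into one about the kernels
themselves. Substituting the Riccati equations for the time derivatives leaves only delay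
derivatives of the kernels and products of the feedback kernel `E₁ + E₂(·, 0)`. The former cancel
against the derivative of the ansatz, because the symmetry of `E₂` makes `∂ₛE₂` and `∂ᵣE₂`
contribute equally to a quadratic form; the latter complete the square of the feedback term.
-/

open MeasureTheory Function

section PartialDerivative

variable {𝕜 E F : Type*} [NontriviallyNormedField 𝕜] [NormedAddCommGroup E] [NormedSpace 𝕜 E]
  [NormedAddCommGroup F] [NormedSpace 𝕜 F] {g : 𝕜 → E → F} {U : Set 𝕜} {V : Set E}

theorem hasDerivWithinAt_left_of_differentiableWithinAt_uncurry {x : 𝕜} {y : E}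
    (hg : DifferentiableWithinAt 𝕜 (uncurry g) (U ×ˢ V) (x, y)) (hy : y ∈ V) :
    HasDerivWithinAt (fun x' => g x' y) (fderivWithin 𝕜 (uncurry g) (U ×ˢ V) (x, y) (1, 0)) U x :=
  hg.hasFDerivWithinAt.comp_hasDerivWithinAt (f := fun x' => (x', y)) x
    ((hasDerivWithinAt_id x U).prodMk (hasDerivWithinAt_const x U y)) fun _ hx' => ⟨hx', hy⟩

theorem continuousOn_derivWithin_left (hg : ContDiffOn 𝕜 1 (uncurry g) (U ×ˢ V))
    (hU : UniqueDiffOn 𝕜 U) (hV : UniqueDiffOn 𝕜 V) :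
    ContinuousOn (uncurry fun x y => derivWithin (fun x' => g x' y) U x) (U ×ˢ V) := by
  refine ((hg.continuousOn_fderivWithin (hU.prod hV) le_rfl).clm_apply
    (continuousOn_const (c := ((1 : 𝕜), (0 : E))))).congr fun p hp => ?_
  exact (hasDerivWithinAt_left_of_differentiableWithinAt_uncurry
    (hg.differentiableOn one_ne_zero p hp) hp.2).derivWithin (hU _ hp.1)

theorem derivWithin_flip_of_symmetric {g : 𝕜 → 𝕜 → F}
    (hsymm : ∀ x ∈ U, ∀ y ∈ U, g x y = g y x) {x y : 𝕜} (hx : x ∈ U) (hy : y ∈ U) :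
    derivWithin (fun v => g x v) U y = derivWithin (fun v => g v x) U y :=
  derivWithin_congr (fun v hv => hsymm x hx v hv) (hsymm x hx y hy)

end PartialDerivative

theorem hasDerivAt_intervalIntegral_of_continuousOn {E : Type*} [NormedAddCommGroup E]
    [NormedSpace ℝ E] {f f' : ℝ → ℝ → E} {K : Set ℝ} {a b s : ℝ} (hK : IsCompact K)
    (hs : s ∈ interior K) (hf : ContinuousOn (uncurry f) (K ×ˢ uIcc a b))
    (hf' : ContinuousOn (uncurry f') (K ×ˢ uIcc a b))
    (hderiv : ∀ x ∈ interior K, ∀ r ∈ uIcc a b, HasDerivAt (fun x => f x r) (f' x r) x) :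
    HasDerivAt (fun x => ∫ r in a..b, f x r) (∫ r in a..b, f' s r) s := by
  have hint : ∀ {h : ℝ → ℝ → E}, ContinuousOn (uncurry h) (K ×ˢ uIcc a b) → ∀ x ∈ interior K,
      IntervalIntegrable (h x) volume a b := fun hh x hx =>
    (hh.uncurry_left x (interior_subset hx)).intervalIntegrable
  obtain ⟨C, hC⟩ := (hK.prod isCompact_uIcc).exists_bound_of_continuousOn hf'
  have hnhds : interior K ∈ nhds s := isOpen_interior.mem_nhds hs
  exact (intervalIntegral.hasDerivAt_integral_of_dominated_loc_of_deriv_le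
    (bound := fun _ => C) hnhds
    (Filter.mem_of_superset hnhds fun x hx => (hint hf x hx).def'.aestronglyMeasurable)
    (hint hf s hs) (hint hf' s hs).def'.aestronglyMeasurable
    (ae_of_all _ fun r hr x hx => hC (x, r) (mk_mem_prod (interior_subset hx)
      (uIoc_subset_uIcc hr)))
    intervalIntegrable_const
    (ae_of_all _ fun r hr x hx => hderiv x hx r (uIoc_subset_uIcc hr))).2

section QuadraticForm

variable {α : Type*} [MeasurableSpace α] {μ : Measure α} [SFinite μ]

theorem integral_integral_add_flip {k : α → α → ℝ} {w : α → ℝ}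
    (hk : Integrable (uncurry fun s r => k s r * w s * w r) (μ.prod μ)) :
    ∫ s, ∫ r, (k s r + k r s) * w s * w r ∂μ ∂μ = 2 * ∫ s, ∫ r, k s r * w s * w r ∂μ ∂μ := by
  have hflip : ∫ s, ∫ r, k r s * w r * w s ∂μ ∂μ = ∫ s, ∫ r, k s r * w s * w r ∂μ ∂μ :=
    (integral_integral_swap hk).symm
  calc ∫ s, ∫ r, (k s r + k r s) * w s * w r ∂μ ∂μ
      = ∫ s, ∫ r, k s r * w s * w r + k r s * w r * w s ∂μ ∂μ := by
        congr! 4 with s r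
        ring
    _ = (∫ s, ∫ r, k s r * w s * w r ∂μ ∂μ) + ∫ s, ∫ r, k r s * w r * w s ∂μ ∂μ :=
        integral_integral_add hk hk.swap
    _ = 2 * ∫ s, ∫ r, k s r * w s * w r ∂μ ∂μ := by rw [hflip, two_mul]

theorem integral_integral_sub_rankOne {k : α → α → ℝ} {b w : α → ℝ}
    (hk : Integrable (uncurry fun s r => k s r * w s * w r) (μ.prod μ))
    (hb : Integrable (fun s => b s * w s) μ) (κ : ℝ) :
    ∫ s, ∫ r, (k s r - κ * b s * b r) * w s * w r ∂μ ∂μ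
      = (∫ s, ∫ r, k s r * w s * w r ∂μ ∂μ) - κ * (∫ s, b s * w s ∂μ) ^ 2 := by
  calc ∫ s, ∫ r, (k s r - κ * b s * b r) * w s * w r ∂μ ∂μ
      = ∫ s, ∫ r, k s r * w s * w r - κ * (b s * w s) * (b r * w r) ∂μ ∂μ := by
        congr! 4 with s r
        ring
    _ = (∫ s, ∫ r, k s r * w s * w r ∂μ ∂μ) - ∫ s, ∫ r, κ * (b s * w s) * (b r * w r) ∂μ ∂μ :=
        integral_integral_sub hk ((hb.const_mul κ).mul_prod hb)
    _ = _ := by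
        simp only [integral_const_mul, integral_mul_const]
        ring

theorem integral_riccati_identity {k : α → α → ℝ} {p b w : α → ℝ}
    (hp : Integrable (fun s => p s * w s) μ) (hb : Integrable (fun s => b s * w s) μ)
    (hk : Integrable (uncurry fun s r => k s r * w s * w r) (μ.prod μ)) (a A κ : ℝ) :
    -2 * a * (∫ s, (p s - κ * A * b s) * w s ∂μ)
      + (∫ s, ∫ r, (k s r + k r s - κ * b s * b r) * w s * w r ∂μ ∂μ)
      + (∫ s, w s * (2 * a * p s - 2 * ∫ r, k s r * w r ∂μ) ∂μ)
      + κ * (A * a - ∫ s, b s * w s ∂μ) ^ 2 = κ * A ^ 2 * a ^ 2 := by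
  have hlinear : ∫ s, (p s - κ * A * b s) * w s ∂μ
      = (∫ s, p s * w s ∂μ) - κ * A * ∫ s, b s * w s ∂μ := by
    simp only [sub_mul, mul_assoc (κ * A)]
    rw [integral_sub hp (hb.const_mul _), integral_const_mul]
  have hsymm : Integrable (uncurry fun s r => (k s r + k r s) * w s * w r) (μ.prod μ) := by
    refine (hk.add hk.swap).congr (ae_of_all _ fun z => ?_)
    simp only [Pi.add_apply, comp_apply, Prod.swap, uncurry]
    ring
  have hquad := (integral_integral_sub_rankOne hsymm hb κ).trans
    (congrArg (· - κ * (∫ s, b s * w s ∂μ) ^ 2) (integral_integral_add_flip hk))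
  have hansatz : ∫ s, w s * (2 * a * p s - 2 * ∫ r, k s r * w r ∂μ) ∂μ
      = 2 * a * (∫ s, p s * w s ∂μ) - 2 * ∫ s, ∫ r, k s r * w s * w r ∂μ ∂μ := by
    have hinner : Integrable (fun s => ∫ r, k s r * w s * w r ∂μ) μ := hk.integral_prod_left
    rw [← integral_const_mul, ← integral_const_mul,
      ← integral_sub (hp.const_mul _) (hinner.const_mul 2)]
    congr! 2 with s
    simp only [mul_right_comm _ (w s), integral_mul_const]
    ring
  rw [hlinear, hquad, hansatz]
  ring

end QuadraticForm

section Reflection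

variable {E : Type*} [NormedAddCommGroup E] [NormedSpace ℝ E]

theorem integral_comp_reflect (f : ℝ → E) (τ : ℝ) :
    ∫ s in (-τ)..0, f (-τ - s) = ∫ s in (-τ)..0, f s := by
  simp only [intervalIntegral.integral_comp_sub_left, sub_zero, sub_self]

theorem reflect_mem_Icc {τ s : ℝ} (hs : s ∈ Icc (-τ) 0) : -τ - s ∈ Icc (-τ) 0 :=
  ⟨by linarith [hs.2], by linarith [hs.1]⟩

theorem derivWithin_comp_reflect (f : ℝ → E) (τ s : ℝ) :
    derivWithin (fun v => f (-τ - v)) (Icc (-τ) 0) s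
      = -derivWithin f (Icc (-τ) 0) (-τ - s) := by
  rw [derivWithin_comp_const_sub]
  simp

end Reflection

section Transport

variable {l u : ℝ} {e b w : ℝ → ℝ} {g : ℝ → ℝ → ℝ}

theorem hasDerivAt_integral_kernel_mul (hg : ContDiffOn ℝ 1 (uncurry g) (Icc l u ×ˢ Icc l u))
    (hw : ContinuousOn w (Icc l u)) {s : ℝ} (hs : s ∈ Ioo l u) :
    HasDerivAt (fun v => ∫ r in l..u, g v r * w r)
      (∫ r in l..u, derivWithin (fun v => g v r) (Icc l u) s * w r) s := by
  have hlu : l < u := hs.1.trans hs.2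
  have hJ : UniqueDiffOn ℝ (Icc l u) := uniqueDiffOn_Icc hlu
  have hw_snd : ContinuousOn (fun p : ℝ × ℝ => w p.2) (Icc l u ×ˢ Icc l u) :=
    hw.comp continuousOn_snd fun _ hp => hp.2
  have hdg : ∀ x ∈ Ioo l u, ∀ r ∈ Icc l u,
      HasDerivAt (fun v => g v r) (derivWithin (fun v => g v r) (Icc l u) x) x := fun x hx r hr =>
    (hasDerivWithinAt_left_of_differentiableWithinAt_uncurry
      (hg.differentiableOn one_ne_zero (x, r) ⟨Ioo_subset_Icc_self hx, hr⟩)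
      hr).differentiableWithinAt.hasDerivWithinAt.hasDerivAt (Icc_mem_nhds hx.1 hx.2)
  refine hasDerivAt_intervalIntegral_of_continuousOn (K := Icc l u) (f := fun v r => g v r * w r)
    (f' := fun s r => derivWithin (fun v => g v r) (Icc l u) s * w r) isCompact_Icc ?_ ?_ ?_ ?_ <;>
    simp only [uIcc_of_le hlu.le, interior_Icc]
  · exact hs
  · exact hg.continuousOn.mul hw_snd
  · exact (continuousOn_derivWithin_left hg hJ hJ).mul hw_snd
  · exact fun x hx r hr => (hdg x hx r hr).mul_const (w r)

theorem derivWithin_ansatz (he : DifferentiableOn ℝ e (Icc l u))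
    (hg : ContDiffOn ℝ 1 (uncurry g) (Icc l u ×ˢ Icc l u)) (hw : ContinuousOn w (Icc l u))
    (a : ℝ) {s : ℝ} (hs : s ∈ Ioo l u) :
    derivWithin (fun v => 2 * a * e v - 2 * ∫ r in l..u, g v r * w r) (Icc l u) s
      = 2 * a * derivWithin e (Icc l u) s
        - 2 * ∫ r in l..u, derivWithin (fun v => g v r) (Icc l u) s * w r := by
  have hs' : s ∈ Icc l u := Ioo_subset_Icc_self hs
  have hlinear := (he s hs').hasDerivWithinAt.const_mul (2 * a)
  have hintegral := (hasDerivAt_integral_kernel_mul hg hw hs).hasDerivWithinAt (s := Icc l u)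
  exact (hlinear.sub (hintegral.const_mul 2)).derivWithin
    (uniqueDiffOn_Icc (hs.1.trans hs.2) s hs')

theorem integrable_kernel_mul {k : ℝ → ℝ → ℝ}
    (hk : ContinuousOn (uncurry k) (Icc l u ×ˢ Icc l u)) (hw : ContinuousOn w (Icc l u)) :
    Integrable (uncurry fun s r => k s r * w s * w r)
      ((volume.restrict (Ioc l u)).prod (volume.restrict (Ioc l u))) := by
  have hw_fst : ContinuousOn (fun p : ℝ × ℝ => w p.1) (Icc l u ×ˢ Icc l u) :=
    hw.comp continuousOn_fst fun _ hp => hp.1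
  have hw_snd : ContinuousOn (fun p : ℝ × ℝ => w p.2) (Icc l u ×ˢ Icc l u) :=
    hw.comp continuousOn_snd fun _ hp => hp.2
  rw [Measure.prod_restrict, ← Measure.volume_eq_prod]
  exact (((hk.mul hw_fst).mul hw_snd).integrableOn_compact
    (isCompact_Icc.prod isCompact_Icc)).mono_set
      (prod_mono Ioc_subset_Icc_self Ioc_subset_Icc_self)

theorem intervalIntegral_riccati_identity (hlu : l < u) (he : ContDiffOn ℝ 1 e (Icc l u))
    (hg : ContDiffOn ℝ 1 (uncurry g) (Icc l u ×ˢ Icc l u))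
    (hsymm : ∀ s ∈ Icc l u, ∀ r ∈ Icc l u, g s r = g r s) (hb : ContinuousOn b (Icc l u))
    (hw : ContinuousOn w (Icc l u)) (a A κ : ℝ) :
    -2 * a * (∫ s in l..u, (derivWithin e (Icc l u) s - κ * A * b s) * w s)
      + (∫ s in l..u, ∫ r in l..u, (derivWithin (fun v => g v r) (Icc l u) s
          + derivWithin (fun v => g s v) (Icc l u) r - κ * b s * b r) * w s * w r)
      + (∫ s in l..u, w s *
          derivWithin (fun v => 2 * a * e v - 2 * ∫ r in l..u, g v r * w r) (Icc l u) s)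
      + κ * (A * a - ∫ s in l..u, b s * w s) ^ 2 = κ * A ^ 2 * a ^ 2 := by
  have hJ : UniqueDiffOn ℝ (Icc l u) := uniqueDiffOn_Icc hlu
  have hIcc : uIcc l u = Icc l u := uIcc_of_le hlu.le
  have hsym_deriv : (∫ s in l..u, ∫ r in l..u, (derivWithin (fun v => g v r) (Icc l u) s
          + derivWithin (fun v => g s v) (Icc l u) r - κ * b s * b r) * w s * w r)
      = ∫ s in l..u, ∫ r in l..u, (derivWithin (fun v => g v r) (Icc l u) s
          + derivWithin (fun v => g v s) (Icc l u) r - κ * b s * b r) * w s * w r := by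
    refine intervalIntegral.integral_congr fun s hs =>
      intervalIntegral.integral_congr fun r hr => ?_
    rw [hIcc] at hs hr
    simp only [derivWithin_flip_of_symmetric hsymm hs hr]
  have hansatz : (∫ s in l..u, w s *
          derivWithin (fun v => 2 * a * e v - 2 * ∫ r in l..u, g v r * w r) (Icc l u) s)
      = ∫ s in l..u, w s * (2 * a * derivWithin e (Icc l u) s
          - 2 * ∫ r in l..u, derivWithin (fun v => g v r) (Icc l u) s * w r) :=
    intervalIntegral.integral_congr_Ioo_of_le hlu.le fun s hs => by
      simp only [derivWithin_ansatz (he.differentiableOn one_ne_zero) hg hw a hs]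
  have hint : ∀ {f : ℝ → ℝ}, ContinuousOn f (Icc l u) →
      Integrable f (volume.restrict (Ioc l u)) := fun hf =>
    (hf.integrableOn_compact isCompact_Icc).mono_set Ioc_subset_Icc_self
  rw [hsym_deriv, hansatz]
  simp only [intervalIntegral.integral_of_le hlu.le]
  exact integral_riccati_identity (hint ((he.continuousOn_derivWithin hJ le_rfl).mul hw))
    (hint (hb.mul hw)) (integrable_kernel_mul (continuousOn_derivWithin_left hg hJ hJ) hw) a A κ

end Transport

/-- A symmetric `C¹` solution, on the time set `I` and with delay `τ`, of the delayed Riccati system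
with arbitrary coefficients: `κ` of the quadratic terms, `ν` of the noise, `q` of the running
cost. The `N`-player system has `κ = 2(1/N² - 1)`, `ν = (1 - 1/N)σ²` and `q = ε/2`. Unique
differentiability of `I` ensures that time derivatives within `I` carry no junk values. -/
structure IsDelayRiccati (I : Set ℝ) (τ κ ν q : ℝ) (E₀ : ℝ → ℝ) (E₁ : ℝ → ℝ → ℝ)
    (E₂ : ℝ → ℝ → ℝ → ℝ) (E₃ : ℝ → ℝ) : Prop where
  uniqueDiffOn : UniqueDiffOn ℝ I
  contDiffOn₀ : ContDiffOn ℝ 1 E₀ I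
  contDiffOn₁ : ContDiffOn ℝ 1 (fun p : ℝ × ℝ => E₁ p.1 p.2) (I ×ˢ Icc (-τ) 0)
  contDiffOn₂ : ContDiffOn ℝ 1 (fun p : ℝ × ℝ × ℝ => E₂ p.1 p.2.1 p.2.2)
    (I ×ˢ Icc (-τ) 0 ×ˢ Icc (-τ) 0)
  contDiffOn₃ : ContDiffOn ℝ 1 E₃ I
  symm : ∀ t ∈ I, ∀ s ∈ Icc (-τ) 0, ∀ r ∈ Icc (-τ) 0, E₂ t s r = E₂ t r s
  eq₀ : ∀ t ∈ I, derivWithin E₀ I t + κ * (E₀ t + E₁ t 0) ^ 2 + q = 0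
  eq₁ : ∀ t ∈ I, ∀ s ∈ Icc (-τ) 0,
    derivWithin (fun u => E₁ u s) I t - derivWithin (fun v => E₁ t v) (Icc (-τ) 0) s
      + κ * (E₀ t + E₁ t 0) * (E₁ t s + E₂ t s 0) = 0
  eq₂ : ∀ t ∈ I, ∀ s ∈ Icc (-τ) 0, ∀ r ∈ Icc (-τ) 0,
    derivWithin (fun u => E₂ u s r) I t - derivWithin (fun v => E₂ t v r) (Icc (-τ) 0) s
      - derivWithin (fun v => E₂ t s v) (Icc (-τ) 0) r
      + κ * (E₁ t s + E₂ t s 0) * (E₁ t r + E₂ t r 0) = 0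
  eq₃ : ∀ t ∈ I, derivWithin E₃ I t + ν * E₀ t = 0

theorem IsNPlayerRiccati.isDelayRiccati {T τ σ ε : ℝ} {N : ℕ} {E₀ : ℝ → ℝ} {E₁ : ℝ → ℝ → ℝ}
    {E₂ : ℝ → ℝ → ℝ → ℝ} {E₃ : ℝ → ℝ} (h : IsNPlayerRiccati T τ σ ε N E₀ E₁ E₂ E₃) (hT : 0 < T)
    (hsym : ∀ t ∈ Icc 0 T, ∀ s ∈ Icc (-τ) 0, ∀ r ∈ Icc (-τ) 0, E₂ t s r = E₂ t r s) :
    IsDelayRiccati (Icc 0 T) τ (2 * (1 / (N : ℝ) ^ 2 - 1)) ((1 - 1 / (N : ℝ)) * σ ^ 2) (ε / 2)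
      E₀ E₁ E₂ E₃ :=
  let ⟨hC₀, hC₁, hC₂, hC₃, h₀, h₁, h₂, h₃⟩ := h
  ⟨uniqueDiffOn_Icc hT, hC₀, hC₁, hC₂, hC₃, hsym, h₀, h₁, h₂, h₃⟩

namespace IsDelayRiccati

variable {I : Set ℝ} {τ κ ν q t : ℝ} {E₀ : ℝ → ℝ} {E₁ : ℝ → ℝ → ℝ} {E₂ : ℝ → ℝ → ℝ → ℝ}
  {E₃ : ℝ → ℝ}

theorem contDiffOn_slice₁ (h : IsDelayRiccati I τ κ ν q E₀ E₁ E₂ E₃) (ht : t ∈ I) :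
    ContDiffOn ℝ 1 (E₁ t) (Icc (-τ) 0) :=
  h.contDiffOn₁.comp (contDiff_prodMk_right t).contDiffOn fun _ hs => ⟨ht, hs⟩

theorem contDiffOn_slice₂ (h : IsDelayRiccati I τ κ ν q E₀ E₁ E₂ E₃) (ht : t ∈ I) :
    ContDiffOn ℝ 1 (uncurry (E₂ t)) (Icc (-τ) 0 ×ˢ Icc (-τ) 0) :=
  h.contDiffOn₂.comp (contDiff_prodMk_right t).contDiffOn fun _ hp => ⟨ht, hp⟩

theorem continuousOn_feedback (h : IsDelayRiccati I τ κ ν q E₀ E₁ E₂ E₃) (hτ : 0 ≤ τ)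
    (ht : t ∈ I) : ContinuousOn (fun s => E₁ t s + E₂ t s 0) (Icc (-τ) 0) :=
  (h.contDiffOn_slice₁ ht).continuousOn.add <|
    (h.contDiffOn_slice₂ ht).continuousOn.comp
      (by fun_prop : ContinuousOn (fun s : ℝ => (s, (0 : ℝ))) (Icc (-τ) 0))
      fun _ hs => ⟨hs, neg_nonpos.mpr hτ, le_rfl⟩

theorem integral_timeDeriv₁ (h : IsDelayRiccati I τ κ ν q E₀ E₁ E₂ E₃) (hτ : 0 ≤ τ) (ht : t ∈ I)
    (w : ℝ → ℝ) :
    ∫ s in (-τ)..0, derivWithin (fun u => E₁ u (-τ - s)) I t * w s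
      = ∫ s in (-τ)..0, (derivWithin (E₁ t) (Icc (-τ) 0) s
          - κ * (E₀ t + E₁ t 0) * (E₁ t s + E₂ t s 0)) * w (-τ - s) := by
  rw [← integral_comp_reflect]
  simp only [sub_sub_cancel]
  refine intervalIntegral.integral_congr fun s hs => ?_
  rw [uIcc_of_le (neg_nonpos.mpr hτ)] at hs
  linear_combination w (-τ - s) * h.eq₁ t ht s hs

theorem integral_timeDeriv₂ (h : IsDelayRiccati I τ κ ν q E₀ E₁ E₂ E₃) (hτ : 0 ≤ τ) (ht : t ∈ I)
    (w : ℝ → ℝ) :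
    ∫ s in (-τ)..0, ∫ r in (-τ)..0,
        derivWithin (fun u => E₂ u (-τ - s) (-τ - r)) I t * w s * w r
      = ∫ s in (-τ)..0, ∫ r in (-τ)..0,
          (derivWithin (fun v => E₂ t v r) (Icc (-τ) 0) s
            + derivWithin (fun v => E₂ t s v) (Icc (-τ) 0) r
            - κ * (E₁ t s + E₂ t s 0) * (E₁ t r + E₂ t r 0)) * w (-τ - s) * w (-τ - r) := by
  rw [← integral_comp_reflect]
  refine intervalIntegral.integral_congr fun s hs => ?_
  simp only [sub_sub_cancel]
  rw [← integral_comp_reflect]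
  simp only [sub_sub_cancel]
  refine intervalIntegral.integral_congr fun r hr => ?_
  rw [uIcc_of_le (neg_nonpos.mpr hτ)] at hs hr
  linear_combination w (-τ - s) * w (-τ - r) * h.eq₂ t ht s hs r hr

end IsDelayRiccati

theorem integral_mul_derivWithin_reflect_ansatz (e : ℝ → ℝ) (g : ℝ → ℝ → ℝ) (w : ℝ → ℝ)
    (a τ : ℝ) :
    ∫ s in (-τ)..0, w s * derivWithin (fun s' => 2 * a * e (-τ - s')
        - 2 * ∫ r in (-τ)..0, g (-τ - s') (-τ - r) * w r) (Icc (-τ) 0) s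
      = -∫ s in (-τ)..0, w (-τ - s) * derivWithin (fun v => 2 * a * e v
          - 2 * ∫ r in (-τ)..0, g v r * w (-τ - r)) (Icc (-τ) 0) s := by
  have hinner : ∀ v, ∫ r in (-τ)..0, g v (-τ - r) * w r
      = ∫ r in (-τ)..0, g v r * w (-τ - r) := fun v => by
    rw [← integral_comp_reflect]
    simp only [sub_sub_cancel]
  simp only [hinner]
  rw [← integral_comp_reflect, ← intervalIntegral.integral_neg]
  refine intervalIntegral.integral_congr fun s _ => ?_
  simp only [derivWithin_comp_reflect (fun v => 2 * a * e v
    - 2 * ∫ r in (-τ)..0, g v r * w (-τ - r)), sub_sub_cancel, mul_neg]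

theorem nplayer_ansatz_verification_general {I : Set ℝ} {τ κ ν q : ℝ} {E₀ : ℝ → ℝ}
    {E₁ : ℝ → ℝ → ℝ} {E₂ : ℝ → ℝ → ℝ → ℝ} {E₃ : ℝ → ℝ}
    (h : IsDelayRiccati I τ κ ν q E₀ E₁ E₂ E₃) (hτ : 0 < τ) {t : ℝ} (ht : t ∈ I) (a : ℝ)
    {w : ℝ → ℝ} (hw : ContinuousOn w (Icc (-τ) 0)) :
    derivWithin E₀ I t * a ^ 2
      - 2 * a * (∫ s in (-τ)..0, derivWithin (fun u => E₁ u (-τ - s)) I t * w s)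
      + (∫ s in (-τ)..0, ∫ r in (-τ)..0,
          derivWithin (fun u => E₂ u (-τ - s) (-τ - r)) I t * w s * w r)
      + derivWithin E₃ I t + ν * E₀ t
      - (∫ s in (-τ)..0, w s * derivWithin (fun s' => 2 * a * E₁ t (-τ - s')
          - 2 * ∫ r in (-τ)..0, E₂ t (-τ - s') (-τ - r) * w r) (Icc (-τ) 0) s)
      + κ * ((E₀ t + E₁ t 0) * a
          - ∫ s in (-τ)..0, (E₁ t (-τ - s) + E₂ t (-τ - s) 0) * w s) ^ 2
      + q * a ^ 2 = 0 := by
  have hfeedback : ∫ s in (-τ)..0, (E₁ t (-τ - s) + E₂ t (-τ - s) 0) * w s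
      = ∫ s in (-τ)..0, (E₁ t s + E₂ t s 0) * w (-τ - s) := by
    rw [← integral_comp_reflect]
    simp only [sub_sub_cancel]
  have hw_reflect : ContinuousOn (fun s => w (-τ - s)) (Icc (-τ) 0) :=
    hw.comp (by fun_prop) fun _ => reflect_mem_Icc
  have hident := intervalIntegral_riccati_identity (neg_lt_zero.mpr hτ) (h.contDiffOn_slice₁ ht)
    (h.contDiffOn_slice₂ ht) (h.symm t ht) (h.continuousOn_feedback hτ.le ht) hw_reflect
    a (E₀ t + E₁ t 0) κ
  rw [h.integral_timeDeriv₁ hτ.le ht, h.integral_timeDeriv₂ hτ.le ht,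
    integral_mul_derivWithin_reflect_ansatz, hfeedback]
  linear_combination hident + a ^ 2 * h.eq₀ t ht + h.eq₃ t ht

/- STATEMENT 7: a C¹ symmetric solution of the N-player Riccati system (i)–(iv) makes
the quadratic ansatz V^i solve the N-player Nash HJB system: the collected-terms
identity holds for every t ∈ [0,T], a ∈ ℝ and continuous w : [−τ,0] → ℝ. -/
theorem nplayer_ansatz_verification (T τ σ ε : ℝ)
    (hT : 0 < T) (hτ : 0 < τ) (hτT : τ ≤ T) (hσ : 0 < σ) (hε : 0 < ε)
    (N : ℕ) (hN : 2 ≤ N)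
    (E₀ : ℝ → ℝ) (E₁ : ℝ → ℝ → ℝ) (E₂ : ℝ → ℝ → ℝ → ℝ) (E₃ : ℝ → ℝ)
    (hRic : IsNPlayerRiccati T τ σ ε N E₀ E₁ E₂ E₃)
    (hsym : ∀ t ∈ Icc (0:ℝ) T, ∀ s ∈ Icc (-τ) (0:ℝ), ∀ r ∈ Icc (-τ) (0:ℝ),
      E₂ t s r = E₂ t r s) :
    ∀ t ∈ Icc (0:ℝ) T, ∀ a : ℝ, ∀ w : ℝ → ℝ, ContinuousOn w (Icc (-τ) 0) →
      derivWithin E₀ (Icc 0 T) t * a^2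
        - 2 * a * (∫ s in (-τ)..(0:ℝ),
            derivWithin (fun u => E₁ u (-τ - s)) (Icc 0 T) t * w s)
        + (∫ s in (-τ)..(0:ℝ), ∫ r in (-τ)..(0:ℝ),
            derivWithin (fun u => E₂ u (-τ - s) (-τ - r)) (Icc 0 T) t * w s * w r)
        + derivWithin E₃ (Icc 0 T) t + (1 - 1/(N:ℝ)) * σ^2 * E₀ t
        - (∫ s in (-τ)..(0:ℝ), w s *
            derivWithin (fun s' => 2 * a * E₁ t (-τ - s')
              - 2 * ∫ r in (-τ)..(0:ℝ), E₂ t (-τ - s') (-τ - r) * w r)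
              (Icc (-τ) 0) s)
        + 2 * (1/(N:ℝ)^2 - 1) * ((E₀ t + E₁ t 0) * a
            - ∫ s in (-τ)..(0:ℝ), (E₁ t (-τ - s) + E₂ t (-τ - s) 0) * w s)^2
        + ε/2 * a^2 = 0 := by
  intro t ht a w hw
  exact nplayer_ansatz_verification_general (hRic.isDelayRiccati hT hsym) hτ ht a hw
end
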